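/- Fix K > 0 and x ∈ ℝ. For each N let λ_i^N be reals, ω_i^N = λ_i^N − λ_{i−1}^N, and set a_{N,ε} = (1/(2Nε)) ∑_{i : |i−Nx|<Nε} m₁(μ_K[ω_i^N, λ_i^N]), where m₁ denotes the first moment. Assume: (i) limsup_{ε→0} limsup_{N→∞} max_{i : |i−Nx|<Nε} N·|ω_{i+1}^N − ω_i^N| < ∞; (ii) a_{N,ε} converges to an irrational number w as N→∞ and then ε→0. Then there exist constants C_{N,ε} with C_{N,ε} → 0 as N→∞ and then ε→0 such that for all n ∈ ℤ, |(1/(2Nε)) ∑_{i : |i−Nx|<Nε} μ_K[ω_i^N, λ_i^N](n) − μ_K^∞[a_{N,ε}](n)| ≤ C_{N,ε} · exp(−K n²/3). Consequently, for every f : ℤ → ℝ with ∑_{n∈ℤ} |f(n)| exp(−K n²/3) < ∞, setting f̂(ω) = ∑_{n∈ℤ} f(n) μ_K^∞[ω](n), one has (1/(2Nε)) ∑_{i : |i−Nx|<Nε} ∑_{n∈ℤ} f(n) μ_K[ω_i^N, λ_i^N](n) − f̂(a_{N,ε}) → 0 as N→∞ and then ε→0. -/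

import Mathlib

/-!
The values `lam_i` over a window are equidistributed modulo one, for the following reasons.

Writing the mean of the discrete Gaussian `rho K lam` as `lam + meanDev K lam` with `meanDev`
bounded, the first moment of `muK K ω_i lam_i` is a difference of means at consecutive sites
(`m1_muK`), so the average `a` of first moments telescopes to the average of the increments `ω_i`
up to `O(1/(Nε))`. The bound on second differences makes the `ω_i` of one window differ by `O(ε)`,
hence each `ω_i` is uniformly close to `w` (`increments_close`).

As `w` is irrational, each nontrivial exponential sum over the window telescopes up to a small
error (`tendsto_fourier`). Density of trigonometric polynomials gives equidistribution against
continuous periodic functions (`tendsto_circle`), and a compactness argument allows the observable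
to depend continuously on `ω_i` (`tendsto_observable`). Applied to `muK`, whose closed form
`muK_eq` shows continuity and periodicity, this gives convergence for each fixed `n`.

The uniform weighted bound follows since `muK` decays at the rate `5K/12 > K/3` for bounded `ω`
(`muK_le`): outside a finite set of `n` the weighted discrepancy is small by decay alone. The best
constant `C`, the supremum over `n` of the weighted discrepancy, therefore tends to zero.

The iterated limit is convergence along the curried filter `iterFilter`.
-/
open Filter
open scoped Classical

/-- The window of lattice sites around `x` at scale `(N, ε)`:
integers `i` with `|i - N·x| < N·ε`. -/
noncomputable def window (N : ℕ) (x ε : ℝ) : Finset ℤ :=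
  (Finset.Icc (Int.ceil ((N : ℝ) * x - (N : ℝ) * ε))
      (Int.floor ((N : ℝ) * x + (N : ℝ) * ε))).filter
    (fun i => |(i : ℝ) - (N : ℝ) * x| < (N : ℝ) * ε)

/-- Window average `(1/(2Nε)) ∑_{i : |i−Nx|<Nε} a i`. -/
noncomputable def winAvg (N : ℕ) (x ε : ℝ) (a : ℤ → ℝ) : ℝ :=
  (1 / (2 * (N : ℝ) * ε)) * ∑ i ∈ window N x ε, a i

/-- Maximum of a (nonnegative) function over a finite set of integers
(0 if the set is empty). -/
noncomputable def fmax (s : Finset ℤ) (f : ℤ → ℝ) : ℝ :=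
  ((s.sup fun i => Real.toNNReal (f i) : NNReal) : ℝ)

/-- limsup over `N → ∞`, valued in `EReal` to avoid junk values. -/
noncomputable def elimsup (f : ℕ → ℝ) : EReal :=
  Filter.limsup (fun N => ((f N : ℝ) : EReal)) Filter.atTop

/-- `Q(N,ε) → L` as `N → ∞` and then `ε → 0`. -/
def DTendsto (Q : ℕ → ℝ → ℝ) (L : ℝ) : Prop :=
  ∀ δ : ℝ, 0 < δ → ∃ ε₀ : ℝ, 0 < ε₀ ∧ ∀ ε : ℝ, 0 < ε → ε < ε₀ →
    elimsup (fun N => |Q N ε - L|) ≤ (δ : EReal)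

/-- `limsup_{ε→0} limsup_{N→∞} Q(N,ε) < ∞`. -/
def DBddLimsup (Q : ℕ → ℝ → ℝ) : Prop :=
  ∃ ε₀ : ℝ, 0 < ε₀ ∧ ∃ C : ℝ, ∀ ε : ℝ, 0 < ε → ε < ε₀ →
    elimsup (fun N => Q N ε) ≤ (C : EReal)

/-- Normalization constant `Z_K(λ) = ∑_{m∈ℤ} exp(−K(m−λ)²)`. -/
noncomputable def Zfun (K lam : ℝ) : ℝ :=
  ∑' m : ℤ, Real.exp (-K * ((m : ℝ) - lam) ^ 2)

/-- Discrete Gaussian pmf `ρ_K[λ](n) = exp(−K(n−λ)²)/Z_K(λ)`. -/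
noncomputable def rho (K lam : ℝ) (n : ℤ) : ℝ :=
  Real.exp (-K * ((n : ℝ) - lam) ^ 2) / Zfun K lam

/-- `μ_K[ω,λ](n) = ∑_{m∈ℤ} ρ_K[λ−ω](m) ρ_K[λ](m+n)`. -/
noncomputable def muK (K ω lam : ℝ) (n : ℤ) : ℝ :=
  ∑' m : ℤ, rho K (lam - ω) m * rho K lam (m + n)

/-- First moment of a pmf on ℤ. -/
noncomputable def m1 (p : ℤ → ℝ) : ℝ := ∑' n : ℤ, (n : ℝ) * p n

/-- `μ_K^∞[ω](n) = ∫_0^1 μ_K[ω,λ](n) dλ`. -/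
noncomputable def muInf (K ω : ℝ) (n : ℤ) : ℝ :=
  ∫ lam in (0 : ℝ)..1, muK K ω lam n

open Topology

/-! ### Discrete Gaussians and their convolutions -/

lemma summable_gauss {K : ℝ} (hK : 0 < K) (k : ℕ) :
    Summable fun m : ℤ => |(m : ℝ)| ^ k * Real.exp (-K * (m : ℝ) ^ 2) := by
  have h := summable_pow_mul_jacobiTheta₂_term_bound 0 (T := K / Real.pi)
    (div_pos hK Real.pi_pos) k
  refine h.congr fun m => ?_
  push_cast
  congr 2
  field_simp
  ring

lemma gauss_term_le {K : ℝ} (hK : 0 < K) {R lam : ℝ} (h : |lam| ≤ R) (y : ℝ) :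
    Real.exp (-K * (y - lam) ^ 2) ≤ Real.exp (K * R ^ 2) * Real.exp (-(K / 2) * y ^ 2) := by
  rw [← Real.exp_add, Real.exp_le_exp]
  have h2 : lam ^ 2 ≤ R ^ 2 := sq_le_sq' (by linarith [neg_abs_le lam]) (by linarith [le_abs_self lam])
  have h3 : y ^ 2 / 2 - R ^ 2 ≤ (y - lam) ^ 2 := by nlinarith [sq_nonneg (y - 2 * lam)]
  nlinarith

lemma summable_Z {K : ℝ} (hK : 0 < K) (lam : ℝ) :
    Summable fun m : ℤ => Real.exp (-K * ((m : ℝ) - lam) ^ 2) := by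
  have h := (summable_gauss (half_pos hK) 0).mul_left (Real.exp (K * |lam| ^ 2))
  refine Summable.of_nonneg_of_le (fun _ => (Real.exp_pos _).le) (fun m => ?_) h
  simpa using gauss_term_le hK (le_refl |lam|) (m : ℝ)

lemma Zfun_pos {K : ℝ} (hK : 0 < K) (lam : ℝ) : 0 < Zfun K lam :=
  (summable_Z hK lam).tsum_pos (fun _ => (Real.exp_pos _).le) 0 (Real.exp_pos _)

/-- The summand at `⌊lam⌋` alone gives a lower bound uniform in `lam`. -/
lemma exp_neg_le_Zfun {K : ℝ} (hK : 0 < K) (lam : ℝ) : Real.exp (-K) ≤ Zfun K lam := by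
  refine le_trans ?_ ((summable_Z hK lam).le_tsum ⌊lam⌋ fun _ _ => (Real.exp_pos _).le)
  rw [Real.exp_le_exp]
  have h1 := Int.floor_le lam
  have h2 := Int.lt_floor_add_one lam
  have h3 : ((⌊lam⌋ : ℝ) - lam) ^ 2 ≤ 1 := by nlinarith
  nlinarith

lemma Zfun_sub_int (K lam : ℝ) (j : ℤ) : Zfun K (lam - j) = Zfun K lam := by
  unfold Zfun
  rw [← (Equiv.subRight j).tsum_eq]
  simp

lemma continuous_Zfun {K : ℝ} (hK : 0 < K) : Continuous (Zfun K) := by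
  rw [continuous_iff_continuousAt]
  intro lam
  have h : ContinuousOn (Zfun K) (Metric.ball 0 (|lam| + 1)) := by
    refine continuousOn_tsum (u := fun m : ℤ => Real.exp (K * (|lam| + 1) ^ 2) *
      (|(m : ℝ)| ^ 0 * Real.exp (-(K / 2) * (m : ℝ) ^ 2))) (fun m => by fun_prop)
      ((summable_gauss (half_pos hK) 0).mul_left _) fun m y hy => ?_
    have hy' : |y| ≤ |lam| + 1 := by simpa using (mem_ball_zero_iff.1 hy).le
    simpa using gauss_term_le hK hy' (m : ℝ)
  exact h.continuousAt (Metric.isOpen_ball.mem_nhds (by simp))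

lemma Zfun_le {K : ℝ} (hK : 0 < K) : ∃ B, ∀ lam, Zfun K lam ≤ B := by
  refine ⟨∑' m : ℤ, Real.exp (K * 1 ^ 2) * (|(m : ℝ)| ^ 0 * Real.exp (-(K / 2) * (m : ℝ) ^ 2)),
    fun lam => ?_⟩
  rw [← Zfun_sub_int K lam ⌊lam⌋]
  refine (summable_Z hK _).tsum_le_tsum (fun m => ?_)
    ((summable_gauss (half_pos hK) 0).mul_left _)
  have : |lam - ⌊lam⌋| ≤ 1 := by
    rw [Int.self_sub_floor, abs_of_nonneg (Int.fract_nonneg _)]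
    exact (Int.fract_lt_one _).le
  simpa using gauss_term_le hK this (m : ℝ)

/-- Completing the square, `u² + v² = (v - u)²/2 + (u + v)²/2`, turns the convolution defining
`muK` into a closed form in terms of `Zfun`. -/
lemma muK_eq {K : ℝ} (ω lam : ℝ) (n : ℤ) :
    muK K ω lam n = Real.exp (-(K / 2) * ((n : ℝ) - ω) ^ 2) *
      Zfun (2 * K) (lam - (n + ω) / 2) / (Zfun K (lam - ω) * Zfun K lam) := by
  unfold muK rho
  rw [Zfun.eq_1 (2 * K), ← tsum_mul_left, ← tsum_div_const]
  refine tsum_congr fun m => ?_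
  rw [div_mul_div_comm, ← Real.exp_add, ← Real.exp_add]
  push_cast
  congr 2
  ring

lemma muK_nonneg {K : ℝ} (hK : 0 < K) (ω lam : ℝ) (n : ℤ) : 0 ≤ muK K ω lam n := by
  rw [muK_eq]
  have h1 := Zfun_pos (mul_pos two_pos hK) (lam - (n + ω) / 2)
  have h2 := Zfun_pos hK (lam - ω)
  have h3 := Zfun_pos hK lam
  positivity

lemma continuous_muK {K : ℝ} (hK : 0 < K) (n : ℤ) :
    Continuous fun p : ℝ × ℝ => muK K p.1 p.2 n := by
  simp_rw [muK_eq]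
  have h1 := continuous_Zfun (mul_pos two_pos hK)
  have h2 := continuous_Zfun hK
  refine Continuous.div (by fun_prop) (by fun_prop) fun p => ?_
  exact (mul_pos (Zfun_pos hK _) (Zfun_pos hK _)).ne'

lemma periodic_muK (K ω : ℝ) (n : ℤ) : Function.Periodic (fun lam => muK K ω lam n) 1 := by
  intro lam
  have h (K c : ℝ) : Zfun K (c + 1) = Zfun K c := by
    simpa using (Zfun_sub_int K (c + 1) 1).symm
  simp only [muK_eq]
  rw [h K lam, show lam + 1 - ω = lam - ω + 1 by ring, h,
    show lam + 1 - (n + ω) / 2 = lam - (n + ω) / 2 + 1 by ring, h]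

/-- Gaussian decay at rate `5/12`, strictly better than the target rate `1/3`, uniformly for
`ω` in a bounded set. -/
lemma muK_le {K : ℝ} (hK : 0 < K) (M : ℝ) : ∃ B, 0 < B ∧ ∀ ω lam, |ω| ≤ M → ∀ n : ℤ,
    muK K ω lam n ≤ B * Real.exp (-(K / 12) * (n : ℝ) ^ 2) * Real.exp (-K * (n : ℝ) ^ 2 / 3) := by
  obtain ⟨B, hB⟩ := Zfun_le (mul_pos two_pos hK)
  have hB0 : 0 < B := (Zfun_pos (mul_pos two_pos hK) 0).trans_le (hB 0)
  refine ⟨Real.exp (5 * K * M ^ 2 / 2) * B / (Real.exp (-K) * Real.exp (-K)), by positivity,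
    fun ω lam hω n => ?_⟩
  rw [muK_eq, mul_assoc, div_mul_eq_mul_div]
  have hZ := exp_neg_le_Zfun hK
  refine div_le_div₀ (by positivity) ?_ (by positivity)
    (mul_le_mul (hZ _) (hZ _) (by positivity) (Zfun_pos hK _).le)
  rw [mul_right_comm]
  refine mul_le_mul ?_ (hB _) (Zfun_pos (mul_pos two_pos hK) _).le (by positivity)
  rw [← Real.exp_add, ← Real.exp_add, Real.exp_le_exp]
  have h2 : ω ^ 2 ≤ M ^ 2 := sq_le_sq' (by linarith [neg_abs_le ω]) (by linarith [le_abs_self ω])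
  have h3 : 5 / 6 * (n : ℝ) ^ 2 - 5 * M ^ 2 ≤ ((n : ℝ) - ω) ^ 2 := by
    nlinarith [sq_nonneg ((n : ℝ) - 6 * ω)]
  nlinarith

/-- The deviation of the mean of the discrete Gaussian from its parameter. -/
noncomputable def meanDev (K lam : ℝ) : ℝ := ∑' m : ℤ, ((m : ℝ) - lam) * rho K lam m

lemma summable_dev {K : ℝ} (hK : 0 < K) (lam : ℝ) :
    Summable fun m : ℤ => |(m : ℝ) - lam| * rho K lam m := by
  have h := ((summable_gauss (half_pos hK) 1).add
    ((summable_gauss (half_pos hK) 0).mul_left |lam|)).mul_left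
      (Real.exp (K * |lam| ^ 2) / Zfun K lam)
  have hZ := Zfun_pos hK lam
  refine Summable.of_nonneg_of_le (fun m => ?_) (fun m => ?_) h
  · unfold rho; positivity
  · have h1 := gauss_term_le hK (le_refl |lam|) (m : ℝ)
    have h2 : |(m : ℝ) - lam| ≤ |(m : ℝ)| + |lam| := abs_sub _ _
    calc |(m : ℝ) - lam| * rho K lam m
        ≤ (|(m : ℝ)| + |lam|) *
          ((Real.exp (K * |lam| ^ 2) * Real.exp (-(K / 2) * (m : ℝ) ^ 2)) / Zfun K lam) := by
          unfold rho; gcongr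
      _ = _ := by ring

lemma summable_rho {K : ℝ} (hK : 0 < K) (lam : ℝ) : Summable (rho K lam) :=
  (summable_Z hK lam).div_const _

lemma tsum_rho {K : ℝ} (hK : 0 < K) (lam : ℝ) : ∑' m, rho K lam m = 1 := by
  unfold rho
  rw [tsum_div_const]
  exact div_self (Zfun_pos hK lam).ne'

lemma rho_nonneg {K : ℝ} (hK : 0 < K) (lam : ℝ) (m : ℤ) : 0 ≤ rho K lam m :=
  div_nonneg (Real.exp_pos _).le (Zfun_pos hK lam).le

lemma rho_sub_int (K lam : ℝ) (j m : ℤ) : rho K (lam - j) (m - j) = rho K lam m := by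
  unfold rho
  rw [Zfun_sub_int]
  push_cast
  congr 3
  ring

lemma meanDev_sub_int (K lam : ℝ) (j : ℤ) : meanDev K (lam - j) = meanDev K lam := by
  unfold meanDev
  rw [← (Equiv.subRight j).tsum_eq]
  refine tsum_congr fun m => ?_
  simp [rho_sub_int]

lemma meanDev_bdd {K : ℝ} (hK : 0 < K) : ∃ B, 0 ≤ B ∧ ∀ lam, |meanDev K lam| ≤ B := by
  let u : ℤ → ℝ := fun m => Real.exp (K * 1 ^ 2) / Real.exp (-K) *
    (|(m : ℝ)| ^ 1 * Real.exp (-(K / 2) * (m : ℝ) ^ 2) +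
      |(m : ℝ)| ^ 0 * Real.exp (-(K / 2) * (m : ℝ) ^ 2))
  have hu : Summable u :=
    ((summable_gauss (half_pos hK) 1).add (summable_gauss (half_pos hK) 0)).mul_left _
  refine ⟨∑' m, u m, tsum_nonneg fun m => by positivity, fun lam => ?_⟩
  rw [← meanDev_sub_int K lam ⌊lam⌋]
  have h1 : |lam - ⌊lam⌋| ≤ 1 := by
    rw [Int.self_sub_floor, abs_of_nonneg (Int.fract_nonneg _)]
    exact (Int.fract_lt_one _).le
  generalize lam - ⌊lam⌋ = r at h1 ⊢
  rw [← Real.norm_eq_abs]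
  refine tsum_of_norm_bounded hu.hasSum fun m => ?_
  rw [norm_mul, Real.norm_eq_abs, Real.norm_eq_abs, abs_of_nonneg (rho_nonneg hK _ _)]
  have h2 : |(m : ℝ) - r| ≤ |(m : ℝ)| + 1 := (abs_sub _ _).trans (by linarith)
  have hZ := Zfun_pos hK r
  calc |(m : ℝ) - r| * rho K r m
      ≤ (|(m : ℝ)| + 1) *
        ((Real.exp (K * 1 ^ 2) * Real.exp (-(K / 2) * (m : ℝ) ^ 2)) / Real.exp (-K)) := by
        unfold rho
        gcongr
        · exact gauss_term_le hK h1 _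
        · exact exp_neg_le_Zfun hK r
    _ = u m := by simp only [u]; ring

/-- The first moment is a difference of means, so along the chain `lam` it telescopes. -/
lemma m1_muK {K : ℝ} (hK : 0 < K) (ω lam : ℝ) :
    m1 (muK K ω lam) = (lam + meanDev K lam) - (lam - ω + meanDev K (lam - ω)) := by
  have hmean (c : ℝ) : Summable (fun m : ℤ => (m : ℝ) * rho K c m) ∧
      ∑' m : ℤ, (m : ℝ) * rho K c m = c + meanDev K c := by
    have h1 : Summable fun m : ℤ => ((m : ℝ) - c) * rho K c m := by
      refine Summable.of_norm ((summable_dev hK c).congr fun m => ?_)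
      rw [norm_mul, Real.norm_eq_abs, Real.norm_eq_abs, abs_of_nonneg (rho_nonneg hK _ _)]
    have h2 := (summable_rho hK c).mul_left c
    have h3 : (fun m : ℤ => (m : ℝ) * rho K c m) =
        fun m : ℤ => c * rho K c m + ((m : ℝ) - c) * rho K c m := by
      funext m; ring
    rw [h3]
    refine ⟨h2.add h1, ?_⟩
    rw [h2.tsum_add h1, tsum_mul_left, tsum_rho hK, mul_one]
    rfl
  set c := lam - ω
  obtain ⟨s1, e1⟩ := hmean c
  obtain ⟨s2, e2⟩ := hmean lam
  have r1 := summable_rho hK c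
  have r2 := summable_rho hK lam
  have p1 := summable_mul_of_summable_norm r1.norm s2.norm
  have p2 := summable_mul_of_summable_norm s1.norm r2.norm
  have hsub : Summable fun p : ℤ × ℤ => (((p.2 : ℝ) - p.1) * (rho K c p.1 * rho K lam p.2)) :=
    (p1.sub p2).congr fun p => by ring
  have htot : ∑' p : ℤ × ℤ, (((p.2 : ℝ) - p.1) * (rho K c p.1 * rho K lam p.2)) =
      (lam + meanDev K lam) - (c + meanDev K c) := by
    have : ∀ p : ℤ × ℤ, (((p.2 : ℝ) - p.1) * (rho K c p.1 * rho K lam p.2)) =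
        rho K c p.1 * ((p.2 : ℝ) * rho K lam p.2) - ((p.1 : ℝ) * rho K c p.1) * rho K lam p.2 :=
      fun p => by ring
    rw [tsum_congr this, p1.tsum_sub p2, ← tsum_mul_tsum_of_summable_norm r1.norm s2.norm,
      ← tsum_mul_tsum_of_summable_norm s1.norm r2.norm, tsum_rho hK, tsum_rho hK, e1, e2]
    ring
  -- The shear `(n, m) ↦ (m, m + n)` of `ℤ × ℤ`.
  let e : ℤ × ℤ ≃ ℤ × ℤ :=
    ⟨fun p => (p.2, p.2 + p.1), fun p => (p.2 - p.1, p.1), fun p => by simp, fun p => by simp⟩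
  rw [← htot, ← e.tsum_eq]
  refine Eq.trans (tsum_congr fun n => ?_) (Summable.tsum_prod (e.summable_iff.2 hsub)).symm
  unfold muK
  rw [← tsum_mul_left]
  refine tsum_congr fun m => ?_
  simp [e, c]

/-! ### Equidistribution for nearly constant irrational increments -/

section Equidistribution

variable {α : Type*} {F : Filter α} {lo hi : α → ℤ} {c : α → ℝ} {lam : α → ℤ → ℝ} {w : ℝ}

lemma sum_Ioc_telescope {E : Type*} [AddCommGroup E] (g : ℤ → E) {l h : ℤ} (hlh : l ≤ h) :
    ∑ i ∈ Finset.Ioc l h, (g i - g (i - 1)) = g h - g l := by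
  induction h, hlh using Int.leInduction with
  | base => simp
  | succ n hn ih =>
    have : Finset.Ioc l (n + 1) = insert (n + 1) (Finset.Ioc l n) := by
      ext i; simp only [Finset.mem_Ioc, Finset.mem_insert]; omega
    rw [this, Finset.sum_insert (by simp), ih]
    simp

lemma norm_sum_Ioc_telescope_le {E : Type*} [SeminormedAddCommGroup E] (g : ℤ → E) {B : ℝ}
    (hg : ∀ i, ‖g i‖ ≤ B) (l h : ℤ) :
    ‖∑ i ∈ Finset.Ioc l h, (g i - g (i - 1))‖ ≤ 2 * B := by
  have hB : 0 ≤ B := (norm_nonneg _).trans (hg 0)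
  rcases le_total l h with hlh | hlh
  · rw [sum_Ioc_telescope g hlh]
    linarith [norm_sub_le (g h) (g l), hg h, hg l]
  · rw [Finset.Ioc_eq_empty (by omega)]
    simpa using hB

/-- Weyl's criterion: since the increments are close to `w`, the sum
`(1 - e(-kw)) ∑ e(k lam i)` telescopes up to a small error, and `e(-kw) ≠ 1` as `w` is
irrational. -/
lemma tendsto_fourier (hw : Irrational w) (hc : Tendsto c F (𝓝 0))
    (hcc : Tendsto (fun p => c p * (Finset.Ioc (lo p) (hi p)).card) F (𝓝 1))
    (hu : ∀ η > 0, ∀ᶠ p in F, ∀ i ∈ Finset.Ioc (lo p) (hi p),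
      |lam p i - lam p (i - 1) - w| ≤ η) {k : ℤ} (hk : k ≠ 0) :
    Tendsto (fun p => (c p : ℂ) * ∑ i ∈ Finset.Ioc (lo p) (hi p),
      fourier k ((lam p i : ℝ) : UnitAddCircle)) F (𝓝 0) := by
  set e : ℝ → ℂ := fun y => fourier k ((y : ℝ) : UnitAddCircle) with he
  have e_eq (y : ℝ) : e y = Complex.exp (2 * Real.pi * Complex.I * k * y) := by
    simp [he]
  have e_add (y z : ℝ) : e (y + z) = e y * e z := by
    simp only [e_eq, ← Complex.exp_add]; push_cast; ring_nf
  have e_norm (y : ℝ) : ‖e y‖ = 1 := by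
    simp only [he, fourier_apply, Circle.norm_coe]
  have e_zero : e 0 = 1 := by simp [e_eq]
  have e_cont : Continuous e := by
    have : e = fun y : ℝ => Complex.exp (2 * Real.pi * Complex.I * k * y) := funext e_eq
    rw [this]; fun_prop
  have hne : 1 - e (-w) ≠ 0 := by
    intro h0
    have h1 : e (-w) = 1 := (sub_eq_zero.1 h0).symm
    rw [e_eq, Complex.exp_eq_one_iff] at h1
    obtain ⟨n, hn⟩ := h1
    have h2 : (2 * Real.pi * Complex.I) * ((k : ℂ) * (-w : ℝ)) = (2 * Real.pi * Complex.I) * n := by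
      rw [← mul_assoc, hn]; ring
    have h3 : ((k * (-w) : ℝ) : ℂ) = ((n : ℝ) : ℂ) := by
      have := mul_left_cancel₀ Complex.two_pi_I_ne_zero h2
      push_cast at this ⊢; exact this
    have h4 := Complex.ofReal_injective h3
    apply (hw.neg.intCast_mul hk).ne_int n
    exact h4
  have hmain : Tendsto (fun p => (1 - e (-w)) * ((c p : ℂ) * ∑ i ∈ Finset.Ioc (lo p) (hi p),
      e (lam p i))) F (𝓝 0) := by
    rw [Metric.tendsto_nhds]
    intro δ hδ
    obtain ⟨η, hη, hη'⟩ :=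
      Metric.continuousAt_iff.1 (e_cont.continuousAt (x := 0)) (δ / 4) (by positivity)
    have hc' : ∀ᶠ p in F, |c p| < δ / 8 := by
      have := hc.abs; rw [abs_zero] at this
      exact this.eventually_lt_const (by positivity)
    have hcc' : ∀ᶠ p in F, |c p * (Finset.Ioc (lo p) (hi p)).card| < 2 := by
      have := hcc.abs; rw [abs_one] at this
      exact this.eventually_lt_const (by norm_num)
    filter_upwards [hc', hcc', hu (η / 2) (by positivity)] with p h1 h2 h3
    have hsplit : (1 - e (-w)) * ((c p : ℂ) * ∑ i ∈ Finset.Ioc (lo p) (hi p), e (lam p i)) =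
        (c p : ℂ) * ∑ i ∈ Finset.Ioc (lo p) (hi p), (e (lam p i) - e (lam p (i - 1))) +
        (c p : ℂ) * ∑ i ∈ Finset.Ioc (lo p) (hi p),
          e (lam p (i - 1)) * (e 0 - e (lam p i - lam p (i - 1) - w)) := by
      rw [mul_left_comm, ← mul_add, ← Finset.sum_add_distrib, Finset.mul_sum]
      congr 1
      refine Finset.sum_congr rfl fun i _ => ?_
      rw [mul_sub (e (lam p (i - 1))), ← e_add, ← e_add, sub_mul, one_mul, ← e_add]
      ring_nf
    rw [dist_zero_right, hsplit]
    refine (norm_add_le _ _).trans_lt ?_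
    rw [norm_mul, norm_mul, Complex.norm_real, Real.norm_eq_abs]
    have h4 : ‖∑ i ∈ Finset.Ioc (lo p) (hi p), (e (lam p i) - e (lam p (i - 1)))‖ ≤ 2 * 1 :=
      norm_sum_Ioc_telescope_le (fun i => e (lam p i)) (fun i => (e_norm _).le) _ _
    have h5 : ‖∑ i ∈ Finset.Ioc (lo p) (hi p),
        e (lam p (i - 1)) * (e 0 - e (lam p i - lam p (i - 1) - w))‖ ≤
        (Finset.Ioc (lo p) (hi p)).card * (δ / 4) := by
      rw [← nsmul_eq_mul]
      refine (norm_sum_le _ _).trans (Finset.sum_le_card_nsmul _ _ _ fun i hi' => ?_)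
      rw [norm_mul, e_norm, one_mul, norm_sub_rev, ← dist_eq_norm]
      refine (hη' ?_).le
      rw [dist_zero_right, Real.norm_eq_abs]
      linarith [h3 i hi']
    rw [abs_mul, Nat.abs_cast] at h2
    calc _ ≤ |c p| * (2 * 1) + |c p| * ((Finset.Ioc (lo p) (hi p)).card * (δ / 4)) := by gcongr
      _ = |c p| * 2 + |c p| * (Finset.Ioc (lo p) (hi p)).card * (δ / 4) := by ring
      _ < δ / 8 * 2 + 2 * (δ / 4) := by gcongr
      _ ≤ δ := by linarith
  have := hmain.const_mul (1 - e (-w))⁻¹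
  simpa only [← mul_assoc, inv_mul_cancel₀ hne, one_mul, mul_zero] using this

lemma integral_fourier_eq_zero {k : ℤ} (hk : k ≠ 0) :
    ∫ y in (0 : ℝ)..1, fourier k ((y : ℝ) : UnitAddCircle) = 0 := by
  have h0 : (2 * Real.pi * Complex.I * k : ℂ) ≠ 0 :=
    mul_ne_zero Complex.two_pi_I_ne_zero (by exact_mod_cast hk)
  have : ∀ y : ℝ, fourier k ((y : ℝ) : UnitAddCircle) =
      Complex.exp ((2 * Real.pi * Complex.I * k) * y) := fun y => by simp
  simp_rw [this]
  rw [integral_exp_mul_complex h0]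
  have h1 : Complex.exp (2 * Real.pi * Complex.I * k * (1 : ℝ)) = 1 := by
    rw [Complex.exp_eq_one_iff]; exact ⟨k, by push_cast; ring⟩
  rw [h1]; simp

lemma continuous_comp_coe (f : C(UnitAddCircle, ℂ)) :
    Continuous fun y : ℝ => f (y : UnitAddCircle) :=
  f.continuous.comp (AddCircle.continuous_mk' 1)

/-- Equidistribution against continuous functions on the circle: the functions for which it holds
form a closed subspace containing every character. -/
lemma tendsto_circle (hw : Irrational w) (hc : Tendsto c F (𝓝 0))
    (hcc : Tendsto (fun p => c p * (Finset.Ioc (lo p) (hi p)).card) F (𝓝 1))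
    (hu : ∀ η > 0, ∀ᶠ p in F, ∀ i ∈ Finset.Ioc (lo p) (hi p),
      |lam p i - lam p (i - 1) - w| ≤ η) (f : C(UnitAddCircle, ℂ)) :
    Tendsto (fun p => (c p : ℂ) * ∑ i ∈ Finset.Ioc (lo p) (hi p),
      f ((lam p i : ℝ) : UnitAddCircle)) F (𝓝 (∫ y in (0 : ℝ)..1, f (y : UnitAddCircle))) := by
  have hspan : ∀ g ∈ Submodule.span ℂ (Set.range (@fourier 1)),
      Tendsto (fun p => (c p : ℂ) * ∑ i ∈ Finset.Ioc (lo p) (hi p),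
        g ((lam p i : ℝ) : UnitAddCircle)) F
        (𝓝 (∫ y in (0 : ℝ)..1, g (y : UnitAddCircle))) := by
    intro g hg
    induction hg using Submodule.span_induction with
    | mem g hg =>
      obtain ⟨k, rfl⟩ := hg
      rcases eq_or_ne k 0 with rfl | hk
      · have := (Complex.continuous_ofReal.tendsto _).comp hcc
        simpa [Function.comp_def] using this
      · rw [integral_fourier_eq_zero hk]
        exact tendsto_fourier hw hc hcc hu hk
    | zero => simpa using tendsto_const_nhds
    | add g₁ g₂ _ _ h₁ h₂ =>
      have := h₁.add h₂
      simp only [ContinuousMap.add_apply]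
      rw [intervalIntegral.integral_add ((continuous_comp_coe g₁).intervalIntegrable _ _)
        ((continuous_comp_coe g₂).intervalIntegrable _ _)]
      simpa only [← mul_add, ← Finset.sum_add_distrib] using this
    | smul z g _ h =>
      have := h.const_mul z
      simp only [ContinuousMap.smul_apply, smul_eq_mul]
      rw [intervalIntegral.integral_const_mul]
      simpa only [← Finset.mul_sum, mul_left_comm z] using this
  rw [Metric.tendsto_nhds]
  intro δ hδ
  have hmem : f ∈ closure ((Submodule.span ℂ (Set.range (@fourier 1)) : Set C(UnitAddCircle, ℂ))) := by
    have : f ∈ (Submodule.span ℂ (Set.range (@fourier 1))).topologicalClosure := by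
      rw [span_fourier_closure_eq_top]; trivial
    exact this
  obtain ⟨g, hg, hfg⟩ := Metric.mem_closure_iff.1 hmem (δ / 4) (by positivity)
  have hle (y : UnitAddCircle) : ‖f y - g y‖ ≤ δ / 4 := by
    rw [← dist_eq_norm]; exact (ContinuousMap.dist_apply_le_dist y).trans hfg.le
  have hcc' : ∀ᶠ p in F, |c p * (Finset.Ioc (lo p) (hi p)).card| < 2 := by
    have := hcc.abs; rw [abs_one] at this
    exact this.eventually_lt_const (by norm_num)
  filter_upwards [hcc', Metric.tendsto_nhds.1 (hspan g hg) (δ / 4) (by positivity)] with p h1 h2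
  rw [abs_mul, Nat.abs_cast] at h1
  have h3 : ‖(c p : ℂ) * ∑ i ∈ Finset.Ioc (lo p) (hi p), f ((lam p i : ℝ) : UnitAddCircle) -
      (c p : ℂ) * ∑ i ∈ Finset.Ioc (lo p) (hi p), g ((lam p i : ℝ) : UnitAddCircle)‖ ≤
      2 * (δ / 4) := by
    rw [← mul_sub, ← Finset.sum_sub_distrib, norm_mul, Complex.norm_real, Real.norm_eq_abs]
    have : ‖∑ i ∈ Finset.Ioc (lo p) (hi p), (f ((lam p i : ℝ) : UnitAddCircle) -
        g ((lam p i : ℝ) : UnitAddCircle))‖ ≤ (Finset.Ioc (lo p) (hi p)).card * (δ / 4) := by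
      rw [← nsmul_eq_mul]
      exact (norm_sum_le _ _).trans (Finset.sum_le_card_nsmul _ _ _ fun i _ => hle _)
    calc _ ≤ |c p| * ((Finset.Ioc (lo p) (hi p)).card * (δ / 4)) := by gcongr
      _ = |c p| * (Finset.Ioc (lo p) (hi p)).card * (δ / 4) := by ring
      _ ≤ _ := by gcongr
  have h4 : ‖(∫ y in (0 : ℝ)..1, g (y : UnitAddCircle)) -
      ∫ y in (0 : ℝ)..1, f (y : UnitAddCircle)‖ ≤ δ / 4 := by
    rw [← intervalIntegral.integral_sub ((continuous_comp_coe g).intervalIntegrable _ _)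
        ((continuous_comp_coe f).intervalIntegrable _ _)]
    have := intervalIntegral.norm_integral_le_of_norm_le_const (a := (0 : ℝ)) (b := 1)
      (f := fun y : ℝ => g (y : UnitAddCircle) - f (y : UnitAddCircle)) (C := δ / 4)
      fun y _ => by rw [norm_sub_rev]; exact hle _
    simpa using this
  rw [dist_eq_norm] at h2 ⊢
  generalize (c p : ℂ) * ∑ i ∈ Finset.Ioc (lo p) (hi p), f ((lam p i : ℝ) : UnitAddCircle) = A at *
  generalize (c p : ℂ) * ∑ i ∈ Finset.Ioc (lo p) (hi p), g ((lam p i : ℝ) : UnitAddCircle) = B at *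
  generalize (∫ y in (0 : ℝ)..1, g (y : UnitAddCircle)) = I at *
  generalize (∫ y in (0 : ℝ)..1, f (y : UnitAddCircle)) = J at *
  calc ‖A - J‖ = ‖(A - B) + (B - I) + (I - J)‖ := by congr 1; ring
    _ ≤ ‖A - B‖ + ‖B - I‖ + ‖I - J‖ := norm_add₃_le
    _ < δ := by linarith

lemma tendsto_periodic (hw : Irrational w) (hc : Tendsto c F (𝓝 0))
    (hcc : Tendsto (fun p => c p * (Finset.Ioc (lo p) (hi p)).card) F (𝓝 1))
    (hu : ∀ η > 0, ∀ᶠ p in F, ∀ i ∈ Finset.Ioc (lo p) (hi p),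
      |lam p i - lam p (i - 1) - w| ≤ η) {H : ℝ → ℝ} (hH : Continuous H)
    (hper : Function.Periodic H 1) :
    Tendsto (fun p => c p * ∑ i ∈ Finset.Ioc (lo p) (hi p), H (lam p i)) F
      (𝓝 (∫ y in (0 : ℝ)..1, H y)) := by
  have hper' : Function.Periodic (fun y => (H y : ℂ)) 1 := fun y => by simp only [hper y]
  let f : C(UnitAddCircle, ℂ) := ⟨hper'.lift,
    continuous_quot_lift _ (Complex.continuous_ofReal.comp hH)⟩
  have hf (y : ℝ) : f (y : UnitAddCircle) = (H y : ℂ) := rfl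
  have := (Complex.continuous_re.tendsto _).comp (tendsto_circle hw hc hcc hu f)
  simp only [hf, intervalIntegral.integral_ofReal, ← Complex.ofReal_sum, ← Complex.ofReal_mul,
    Function.comp_def, Complex.ofReal_re] at this
  exact this

/-- Equidistribution for an observable that also depends on the increment. -/
lemma tendsto_observable (hw : Irrational w) (hc : Tendsto c F (𝓝 0))
    (hcc : Tendsto (fun p => c p * (Finset.Ioc (lo p) (hi p)).card) F (𝓝 1))
    (hu : ∀ η > 0, ∀ᶠ p in F, ∀ i ∈ Finset.Ioc (lo p) (hi p),
      |lam p i - lam p (i - 1) - w| ≤ η) {G : ℝ → ℝ → ℝ}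
    (hG : Continuous fun q : ℝ × ℝ => G q.1 q.2) (hper : ∀ v, Function.Periodic (G v) 1) :
    Tendsto (fun p => c p * ∑ i ∈ Finset.Ioc (lo p) (hi p),
      G (lam p i - lam p (i - 1)) (lam p i)) F (𝓝 (∫ y in (0 : ℝ)..1, G w y)) := by
  have h0 := tendsto_periodic hw hc hcc hu (H := G w) (by fun_prop) (hper w)
  refine h0.congr_dist ?_
  rw [Metric.tendsto_nhds]
  intro δ hδ
  have hloc : ∀ᶠ v in 𝓝 w, ∀ y ∈ Set.Icc (0 : ℝ) 1, dist (G w y) (G v y) < δ / 2 := by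
    refine isCompact_Icc.eventually_forall_of_forall_eventually fun y _ => ?_
    have hcont : Continuous fun z : ℝ × ℝ => dist (G w z.2) (G z.1 z.2) := by
      have : Continuous fun z : ℝ × ℝ => G w z.2 :=
        hG.comp (continuous_const.prodMk continuous_snd)
      exact this.dist hG
    exact (hcont.tendsto (w, y)).eventually_lt_const (by simpa using hδ)
  obtain ⟨η, hη, hη'⟩ := Metric.eventually_nhds_iff.1 hloc
  have hcc' : ∀ᶠ p in F, |c p * (Finset.Ioc (lo p) (hi p)).card| < 2 := by
    have := hcc.abs; rw [abs_one] at this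
    exact this.eventually_lt_const (by norm_num)
  filter_upwards [hcc', hu (η / 2) (by positivity)] with p h1 h2
  rw [abs_mul, Nat.abs_cast] at h1
  rw [dist_zero_right, Real.norm_of_nonneg dist_nonneg, dist_eq_norm, ← mul_sub,
    ← Finset.sum_sub_distrib, norm_mul, Real.norm_eq_abs]
  have h3 : ‖∑ i ∈ Finset.Ioc (lo p) (hi p),
      (G w (lam p i) - G (lam p i - lam p (i - 1)) (lam p i))‖ ≤
      (Finset.Ioc (lo p) (hi p)).card * (δ / 2) := by
    rw [← nsmul_eq_mul]
    refine (norm_sum_le _ _).trans (Finset.sum_le_card_nsmul _ _ _ fun i hi' => ?_)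
    have h4 : dist (lam p i - lam p (i - 1)) w < η := by
      rw [Real.dist_eq]; linarith [h2 i hi']
    have h5 := hη' h4 (Int.fract (lam p i)) ⟨Int.fract_nonneg _, (Int.fract_lt_one _).le⟩
    have h6 (v : ℝ) : G v (Int.fract (lam p i)) = G v (lam p i) := by
      have := (hper v).sub_int_mul_eq ⌊lam p i⌋ (x := lam p i)
      rwa [mul_one, Int.self_sub_floor] at this
    rw [h6, h6, dist_eq_norm] at h5
    exact h5.le
  calc _ ≤ |c p| * ((Finset.Ioc (lo p) (hi p)).card * (δ / 2)) := by gcongr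
    _ = |c p| * (Finset.Ioc (lo p) (hi p)).card * (δ / 2) := by ring
    _ < 2 * (δ / 2) := by gcongr
    _ = δ := by ring

end Equidistribution

/-! ### The iterated limit and the windows -/

/-- The filter on pairs `(ε, N)` encoding `N → ∞` and then `ε → 0`. -/
noncomputable def iterFilter : Filter (ℝ × ℕ) := (𝓝[>] (0 : ℝ)).curry atTop

lemma eventually_iterFilter {P : ℝ × ℕ → Prop} :
    (∀ᶠ p in iterFilter, P p) ↔
      ∃ ε₀ > 0, ∀ ε, 0 < ε → ε < ε₀ → ∀ᶠ N in atTop, P (ε, N) := by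
  unfold iterFilter
  rw [eventually_curry_iff, Filter.Eventually, mem_nhdsGT_iff_exists_Ioo_subset]
  constructor
  · rintro ⟨u, hu, h⟩
    exact ⟨u, hu, fun ε h1 h2 => h ⟨h1, h2⟩⟩
  · rintro ⟨u, hu, h⟩
    exact ⟨u, hu, fun ε hε => h ε hε.1 hε.2⟩

lemma dtendsto_iff {Q : ℕ → ℝ → ℝ} {L : ℝ} :
    DTendsto Q L ↔ Tendsto (fun p : ℝ × ℕ => Q p.2 p.1) iterFilter (𝓝 L) := by
  rw [Metric.tendsto_nhds]
  constructor
  · intro h δ hδ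
    obtain ⟨ε₀, h0, h1⟩ := h (δ / 2) (by positivity)
    refine eventually_iterFilter.2 ⟨ε₀, h0, fun ε hε hε' => ?_⟩
    have h2 : elimsup (fun N => |Q N ε - L|) < (δ : EReal) :=
      (h1 ε hε hε').trans_lt (by exact_mod_cast half_lt_self hδ)
    filter_upwards [eventually_lt_of_limsup_lt h2] with N hN
    rw [Real.dist_eq]
    exact_mod_cast hN
  · intro h δ hδ
    obtain ⟨ε₀, h0, h1⟩ := eventually_iterFilter.1 (h δ hδ)
    refine ⟨ε₀, h0, fun ε hε hε' => limsup_le_of_le (h := ?_)⟩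
    filter_upwards [h1 ε hε hε'] with N hN
    rw [Real.dist_eq] at hN
    exact_mod_cast hN.le

lemma tendsto_iterFilter_of_forall {Q : ℕ → ℝ → ℝ} {L : ℝ}
    (h : ∀ ε > 0, Tendsto (fun N => Q N ε) atTop (𝓝 L)) :
    Tendsto (fun p : ℝ × ℕ => Q p.2 p.1) iterFilter (𝓝 L) := by
  intro s hs
  exact eventually_iterFilter.2 ⟨1, one_pos, fun ε hε _ => (h ε hε) hs⟩

lemma tendsto_fst_iterFilter : Tendsto (fun p : ℝ × ℕ => p.1) iterFilter (𝓝 0) := by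
  rw [Metric.tendsto_nhds]
  intro δ hδ
  refine eventually_iterFilter.2 ⟨δ, hδ, fun ε h1 h2 => Eventually.of_forall fun _ => ?_⟩
  simpa [abs_of_pos h1] using h2

lemma eventually_pos : ∀ᶠ p : ℝ × ℕ in iterFilter, 0 < p.1 ∧ 0 < (p.2 : ℝ) := by
  refine eventually_iterFilter.2 ⟨1, one_pos, fun ε h1 _ => ?_⟩
  filter_upwards [eventually_gt_atTop 0] with N hN
  exact ⟨h1, by exact_mod_cast hN⟩

lemma le_fmax {s : Finset ℤ} {f : ℤ → ℝ} {i : ℤ} (hi : i ∈ s) : f i ≤ fmax s f := by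
  have h := Finset.le_sup (f := fun i => Real.toNNReal (f i)) hi
  exact (Real.le_coe_toNNReal _).trans (NNReal.coe_le_coe.2 h)

lemma window_eq (N : ℕ) (x ε : ℝ) : window N x ε =
    Finset.Ioc ⌊(N : ℝ) * x - N * ε⌋ (⌈(N : ℝ) * x + N * ε⌉ - 1) := by
  ext i
  simp only [window, Finset.mem_filter, Finset.mem_Icc, Finset.mem_Ioc, Int.floor_lt,
    Int.le_sub_one_iff, Int.lt_ceil, Int.ceil_le, Int.le_floor, abs_lt]
  constructor
  · rintro ⟨-, h1, h2⟩
    exact ⟨by linarith, by linarith⟩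
  · rintro ⟨h1, h2⟩
    exact ⟨⟨h1.le, h2.le⟩, by linarith, by linarith⟩

lemma card_window {N : ℕ} {x ε : ℝ} (h : 0 < (N : ℝ) * ε) :
    |((window N x ε).card : ℝ) - 2 * N * ε| ≤ 1 := by
  rw [window_eq, Int.card_Ioc]
  set l := ⌊(N : ℝ) * x - N * ε⌋
  set u := ⌈(N : ℝ) * x + N * ε⌉
  have h1 : (l : ℝ) ≤ N * x - N * ε := Int.floor_le _
  have h2 : N * x - N * ε < (l : ℝ) + 1 := Int.lt_floor_add_one _
  have h3 : N * x + N * ε ≤ (u : ℝ) := Int.le_ceil _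
  have h4 : (u : ℝ) < N * x + N * ε + 1 := Int.ceil_lt_add_one _
  have h5 : 0 ≤ u - 1 - l := by
    have : (l : ℝ) < u := by linarith
    have : l < u := by exact_mod_cast this
    omega
  have h6 : (((u - 1 - l).toNat : ℕ) : ℝ) = u - 1 - l := by
    have : (((u - 1 - l).toNat : ℤ) : ℝ) = ((u - 1 - l : ℤ) : ℝ) := by rw [Int.toNat_of_nonneg h5]
    push_cast at this
    exact this
  rw [h6, abs_le]
  constructor <;> linarith

lemma tendsto_norm_const :
    Tendsto (fun p : ℝ × ℕ => 1 / (2 * (p.2 : ℝ) * p.1)) iterFilter (𝓝 0) := by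
  refine tendsto_iterFilter_of_forall (Q := fun N ε => 1 / (2 * (N : ℝ) * ε)) fun ε hε => ?_
  refine Tendsto.div_atTop tendsto_const_nhds ?_
  exact (tendsto_natCast_atTop_atTop.const_mul_atTop two_pos).atTop_mul_const hε

lemma tendsto_norm_card (x : ℝ) :
    Tendsto (fun p : ℝ × ℕ => 1 / (2 * (p.2 : ℝ) * p.1) * ((window p.2 x p.1).card : ℝ))
      iterFilter (𝓝 1) := by
  rw [tendsto_iff_dist_tendsto_zero]
  refine squeeze_zero' (Eventually.of_forall fun _ => dist_nonneg) ?_ tendsto_norm_const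
  filter_upwards [eventually_pos] with p ⟨h1, h2⟩
  have h3 := card_window (x := x) (mul_pos h2 h1)
  have h4 : 0 < 2 * (p.2 : ℝ) * p.1 := by positivity
  have : 1 / (2 * (p.2 : ℝ) * p.1) * ((window p.2 x p.1).card : ℝ) - 1 =
      1 / (2 * (p.2 : ℝ) * p.1) * (((window p.2 x p.1).card : ℝ) - 2 * p.2 * p.1) := by
    field_simp
  rw [Real.dist_eq, this, abs_mul, abs_of_pos (by positivity)]
  exact mul_le_of_le_one_right (by positivity) h3

lemma variation_le {v : ℤ → ℝ} {l h : ℤ} {D : ℝ}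
    (hv : ∀ i ∈ Finset.Ioc l h, |v (i + 1) - v i| ≤ D) {i j : ℤ}
    (hi : i ∈ Finset.Ioc l h) (hj : j ∈ Finset.Ioc l h) :
    |v i - v j| ≤ (Finset.Ioc l h).card * D := by
  have hD : 0 ≤ D := (abs_nonneg _).trans (hv i hi)
  have key : ∀ i ∈ Finset.Ioc l h, ∀ j, i ≤ j → j ≤ h → |v i - v j| ≤ ((j - i : ℤ) : ℝ) * D := by
    intro i hi j hij
    induction j, hij using Int.leInduction with
    | base => simp
    | succ n hn ih =>
      intro hnh
      have h1 := ih (by omega)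
      have h2 := hv n (by rw [Finset.mem_Ioc] at hi ⊢; omega)
      rw [abs_sub_comm] at h2
      have h3 := abs_sub_le (v i) (v n) (v (n + 1))
      push_cast at h1 ⊢
      linarith
  have key2 : ∀ i ∈ Finset.Ioc l h, ∀ j ∈ Finset.Ioc l h, i ≤ j →
      |v i - v j| ≤ (Finset.Ioc l h).card * D := by
    intro i hi j hj hij
    refine (key i hi j hij (Finset.mem_Ioc.1 hj).2).trans ?_
    gcongr
    rw [Int.card_Ioc]
    rw [Finset.mem_Ioc] at hi hj
    have : j - i ≤ ((h - l).toNat : ℤ) := by omega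
    exact_mod_cast this
  rcases le_total i j with hij | hij
  · exact key2 i hi j hj hij
  · rw [abs_sub_comm]; exact key2 j hj i hi hij

/-! ### Increments and averages over windows -/

section Main

variable {K : ℝ} {x w : ℝ} {lam ω : ℕ → ℤ → ℝ} {a : ℕ → ℝ → ℝ}

/-- The window average of first moments telescopes to that of the increments up to `O(1/(Nε))`,
and by the bound on second differences all increments in a window are nearly equal; hence each of
them is close to `w`. -/
lemma increments_close (hK : 0 < K)
    (hω : ∀ N i, ω N i = lam N i - lam N (i - 1))
    (ha : ∀ N ε, a N ε = winAvg N x ε (fun i => m1 (muK K (ω N i) (lam N i))))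
    (hi : DBddLimsup (fun N ε =>
      fmax (window N x ε) (fun i => (N : ℝ) * |ω N (i + 1) - ω N i|)))
    (hii : DTendsto a w) :
    ∀ η > 0, ∀ᶠ p : ℝ × ℕ in iterFilter, ∀ i ∈ window p.2 x p.1, |ω p.2 i - w| ≤ η := by
  obtain ⟨C, hC0, hC⟩ : ∃ C : ℝ, 0 ≤ C ∧ ∀ᶠ p : ℝ × ℕ in iterFilter, ∀ i ∈ window p.2 x p.1,
      (p.2 : ℝ) * |ω p.2 (i + 1) - ω p.2 i| ≤ C := by
    obtain ⟨ε₀, h0, C, hC⟩ := hi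
    refine ⟨|C| + 1, by positivity, eventually_iterFilter.2 ⟨ε₀, h0, fun ε h1 h2 => ?_⟩⟩
    have h3 : elimsup (fun N => fmax (window N x ε)
        (fun i => (N : ℝ) * |ω N (i + 1) - ω N i|)) < ((|C| + 1 : ℝ) : EReal) :=
      (hC ε h1 h2).trans_lt (by exact_mod_cast (le_abs_self C).trans_lt (lt_add_one _))
    filter_upwards [eventually_lt_of_limsup_lt h3] with N hN i hi
    have hN' : fmax (window N x ε) (fun i => (N : ℝ) * |ω N (i + 1) - ω N i|) < |C| + 1 := by
      exact_mod_cast hN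
    exact (le_fmax (f := fun i => (N : ℝ) * |ω N (i + 1) - ω N i|) hi).trans hN'.le
  obtain ⟨B, hB0, hB⟩ := meanDev_bdd hK
  have hcc := tendsto_norm_card x
  have hc := tendsto_norm_const
  have hN : Tendsto (fun p : ℝ × ℕ => 1 / (p.2 : ℝ)) iterFilter (𝓝 0) :=
    tendsto_iterFilter_of_forall (Q := fun N _ => 1 / (N : ℝ))
      fun _ _ => tendsto_one_div_atTop_nhds_zero_nat
  have hD : Tendsto (fun p : ℝ × ℕ => 2 * ((2 * p.1 + 1 / (p.2 : ℝ)) * C)) iterFilter (𝓝 0) := by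
    simpa using ((((tendsto_fst_iterFilter.const_mul 2).add hN).mul_const C).const_mul 2)
  have ha' := dtendsto_iff.1 hii
  have hcB : Tendsto (fun p : ℝ × ℕ => |1 / (2 * (p.2 : ℝ) * p.1)| * (2 * B)) iterFilter (𝓝 0) := by
    simpa using hc.abs.mul_const (2 * B)
  have hS : Tendsto (fun p : ℝ × ℕ => |w| *
      |1 - 1 / (2 * (p.2 : ℝ) * p.1) * ((window p.2 x p.1).card : ℝ)|) iterFilter (𝓝 0) := by
    simpa using ((hcc.const_sub 1).abs.const_mul |w|)
  intro η hη
  filter_upwards [hC, eventually_pos, hcc.eventually_lt_const (show (1 : ℝ) < 2 by norm_num),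
    hcc.eventually_const_lt (show (1 / 2 : ℝ) < 1 by norm_num),
    hD.eventually_lt_const (show 0 < η / 8 by positivity),
    hcB.eventually_lt_const (show 0 < η / 8 by positivity),
    hS.eventually_lt_const (show 0 < η / 8 by positivity),
    Metric.tendsto_nhds.1 ha' (η / 8) (by positivity)] with p h1 ⟨hε, hN0⟩ h2 h3 h4 h5 h6 h7 j hj
  have hcpos : 0 < 1 / (2 * (p.2 : ℝ) * p.1) := by positivity
  have hcard := card_window (x := x) (mul_pos hN0 hε)
  rw [ha, winAvg, Real.dist_eq] at h7
  generalize hcdef : 1 / (2 * (p.2 : ℝ) * p.1) = c at *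
  set W := window p.2 x p.1 with hW
  have hvar : ∀ i ∈ W, |ω p.2 j - ω p.2 i| ≤ (2 * p.1 + 1 / (p.2 : ℝ)) * C := by
    intro i hiW
    rw [hW, window_eq] at h1 hiW hj
    have := variation_le (v := ω p.2) (D := C / p.2) (fun i hi => by
      rw [le_div_iff₀ hN0, mul_comm]; exact h1 i hi) hj hiW
    rw [← window_eq, ← hW] at this
    refine this.trans ?_
    calc (W.card : ℝ) * (C / p.2) ≤ (2 * p.2 * p.1 + 1) * (C / p.2) := by
          gcongr; linarith [(abs_le.1 hcard).2]
      _ = _ := by field_simp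
  have hm1 : ∑ i ∈ W, m1 (muK K (ω p.2 i) (lam p.2 i)) = ∑ i ∈ W, ω p.2 i +
      ∑ i ∈ W, (meanDev K (lam p.2 i) - meanDev K (lam p.2 (i - 1))) := by
    rw [← Finset.sum_add_distrib]
    refine Finset.sum_congr rfl fun i _ => ?_
    rw [m1_muK hK, hω, sub_sub_cancel]
    ring
  have e1 : |c * ∑ i ∈ W, (meanDev K (lam p.2 i) - meanDev K (lam p.2 (i - 1)))| < η / 8 := by
    rw [abs_mul]
    refine lt_of_le_of_lt ?_ h5
    gcongr
    rw [hW, window_eq]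
    exact norm_sum_Ioc_telescope_le (fun i => meanDev K (lam p.2 i)) (fun i => hB _) _ _
  have e2 : |c * ∑ i ∈ W, (ω p.2 j - ω p.2 i)| < η / 8 := by
    refine lt_of_le_of_lt ?_ h4
    rw [abs_mul, abs_of_pos hcpos]
    have : |∑ i ∈ W, (ω p.2 j - ω p.2 i)| ≤ W.card * ((2 * p.1 + 1 / (p.2 : ℝ)) * C) := by
      rw [← nsmul_eq_mul]
      exact (Finset.abs_sum_le_sum_abs _ _).trans (Finset.sum_le_card_nsmul _ _ _ hvar)
    calc c * |∑ i ∈ W, (ω p.2 j - ω p.2 i)|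
        ≤ c * (W.card * ((2 * p.1 + 1 / (p.2 : ℝ)) * C)) := by gcongr
      _ = c * W.card * ((2 * p.1 + 1 / (p.2 : ℝ)) * C) := by ring
      _ ≤ _ := by gcongr
  rw [← abs_mul] at h6
  have e3 : c * W.card * (ω p.2 j - w) = c * ∑ i ∈ W, (ω p.2 j - ω p.2 i)
      - c * ∑ i ∈ W, (meanDev K (lam p.2 i) - meanDev K (lam p.2 (i - 1)))
      + (c * ∑ i ∈ W, m1 (muK K (ω p.2 i) (lam p.2 i)) - w) + w * (1 - c * W.card) := by
    rw [hm1, Finset.sum_sub_distrib (s := W) (f := fun _ => ω p.2 j), Finset.sum_const,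
      nsmul_eq_mul]
    ring
  have e4 : |c * W.card * (ω p.2 j - w)| ≤ η / 2 := by
    rw [e3]
    rw [abs_lt] at e1 e2 h6 h7
    rw [abs_le]
    constructor <;> linarith
  rw [abs_mul, abs_of_pos (by linarith)] at e4
  nlinarith [abs_nonneg (ω p.2 j - w)]

lemma continuous_muInf (hK : 0 < K) (n : ℤ) : Continuous fun v => muInf K v n :=
  intervalIntegral.continuous_parametric_intervalIntegral_of_continuous'
    (f := fun v y => muK K v y n) (continuous_muK hK n) 0 1

lemma summable_mul_of_decay {f p : ℤ → ℝ} {B : ℝ}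
    (hf : Summable (fun n : ℤ => |f n| * Real.exp (-K * (n : ℝ) ^ 2 / 3)))
    (hp : ∀ n : ℤ, |p n| ≤ B * Real.exp (-K * (n : ℝ) ^ 2 / 3)) :
    Summable fun n => f n * p n := by
  refine Summable.of_norm_bounded (hf.mul_left B) fun n => ?_
  rw [norm_mul, Real.norm_eq_abs, Real.norm_eq_abs]
  calc |f n| * |p n| ≤ |f n| * (B * Real.exp (-K * (n : ℝ) ^ 2 / 3)) := by gcongr; exact hp n
    _ = _ := by ring

/-- A bound on `muK` at `n`, uniform over `|ω| ≤ M`, passes to the window average and to `muInf`. -/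
lemma winAvg_muInf_le {N : ℕ} {ε v M B : ℝ} {om l : ℤ → ℝ} {n : ℤ} (hK : 0 < K)
    (hB : ∀ ω lam, |ω| ≤ M → muK K ω lam n ≤ B)
    (hom : ∀ i ∈ window N x ε, |om i| ≤ M) (hv : |v| ≤ M) :
    |winAvg N x ε (fun i => muK K (om i) (l i) n)| ≤
      |1 / (2 * (N : ℝ) * ε)| * (window N x ε).card * B ∧ |muInf K v n| ≤ B := by
  constructor
  · unfold winAvg
    rw [abs_mul, mul_assoc |1 / (2 * (N : ℝ) * ε)|]
    have : |∑ i ∈ window N x ε, muK K (om i) (l i) n| ≤ (window N x ε).card * B := by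
      rw [← nsmul_eq_mul]
      refine (Finset.abs_sum_le_sum_abs _ _).trans (Finset.sum_le_card_nsmul _ _ _ fun i hi => ?_)
      rw [abs_of_nonneg (muK_nonneg hK _ _ _)]
      exact hB _ _ (hom i hi)
    gcongr
  · have := intervalIntegral.norm_integral_le_of_norm_le_const (a := (0 : ℝ)) (b := 1)
      (f := fun y : ℝ => muK K v y n) (C := B) fun y _ => by
        rw [Real.norm_of_nonneg (muK_nonneg hK _ _ _)]; exact hB _ _ hv
    simpa [muInf] using this

end Main

theorem stmt3 (K : ℝ) (hK : 0 < K) (x w : ℝ) (hw : Irrational w)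
    (lam ω : ℕ → ℤ → ℝ)
    (hω : ∀ N i, ω N i = lam N i - lam N (i - 1))
    (a : ℕ → ℝ → ℝ)
    (ha : ∀ N ε, a N ε = winAvg N x ε (fun i => m1 (muK K (ω N i) (lam N i))))
    (hi : DBddLimsup (fun N ε =>
      fmax (window N x ε) (fun i => (N : ℝ) * |ω N (i + 1) - ω N i|)))
    (hii : DTendsto a w) :
    (∃ C : ℕ → ℝ → ℝ, DTendsto C 0 ∧
      ∀ (N : ℕ) (ε : ℝ), 0 < ε → ∀ n : ℤ,
        |winAvg N x ε (fun i => muK K (ω N i) (lam N i) n) - muInf K (a N ε) n| ≤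
          C N ε * Real.exp (-K * (n : ℝ) ^ 2 / 3)) ∧
    (∀ f : ℤ → ℝ,
      Summable (fun n : ℤ => |f n| * Real.exp (-K * (n : ℝ) ^ 2 / 3)) →
      DTendsto (fun N ε =>
        winAvg N x ε (fun i => ∑' n : ℤ, f n * muK K (ω N i) (lam N i) n) -
          ∑' n : ℤ, f n * muInf K (a N ε) n) 0) := by
  have hclose := increments_close hK hω ha hi hii
  have hcc := tendsto_norm_card x
  have hc := tendsto_norm_const
  have hA := dtendsto_iff.1 hii
  set d : ℕ → ℝ → ℤ → ℝ := fun N ε n =>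
    winAvg N x ε (fun i => muK K (ω N i) (lam N i) n) - muInf K (a N ε) n with hd
  have hpt (n : ℤ) : Tendsto (fun p : ℝ × ℕ => d p.2 p.1 n) iterFilter (𝓝 0) := by
    have h1 := tendsto_observable (F := iterFilter) (w := w)
      (lo := fun p : ℝ × ℕ => ⌊(p.2 : ℝ) * x - p.2 * p.1⌋)
      (hi := fun p : ℝ × ℕ => ⌈(p.2 : ℝ) * x + p.2 * p.1⌉ - 1)
      (c := fun p : ℝ × ℕ => 1 / (2 * (p.2 : ℝ) * p.1)) (lam := fun p => lam p.2)
      hw hc (by simpa only [← window_eq] using hcc)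
      (by simpa only [← window_eq, ← hω] using hclose)
      (G := fun v y => muK K v y n) (continuous_muK hK n) (fun v => periodic_muK K v n)
    simp only [← window_eq, ← hω] at h1
    have h2 := ((continuous_muInf hK n).tendsto w).comp hA
    have h3 := h1.sub h2
    rw [show (∫ y in (0 : ℝ)..1, muK K w y n) = muInf K w n from rfl, sub_self] at h3
    exact h3
  -- For each `(N, ε)` only finitely many `ω N i` enter, so they are bounded.
  have hbdd (N : ℕ) (ε : ℝ) : ∃ B, ∀ n : ℤ,
      |d N ε n| * Real.exp (K * (n : ℝ) ^ 2 / 3) ≤ B := by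
    obtain ⟨B, hB0, hB⟩ := muK_le hK (∑ i ∈ window N x ε, |ω N i| + |a N ε|)
    refine ⟨|1 / (2 * (N : ℝ) * ε)| * (window N x ε).card * B + B, fun n => ?_⟩
    have h1 : ∀ v y, |v| ≤ ∑ i ∈ window N x ε, |ω N i| + |a N ε| →
        muK K v y n ≤ B * Real.exp (-K * (n : ℝ) ^ 2 / 3) := fun v y hv => by
      refine (hB v y hv n).trans ?_
      gcongr
      refine mul_le_of_le_one_right hB0.le (Real.exp_le_one_iff.2 ?_)
      nlinarith [mul_nonneg hK.le (sq_nonneg (n : ℝ))]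
    obtain ⟨h2, h3⟩ := winAvg_muInf_le (x := x) (N := N) (ε := ε) (om := ω N) (l := lam N) (v := a N ε) hK h1
      (fun i hi => by
        have := Finset.single_le_sum (f := fun i => |ω N i|) (fun i _ => abs_nonneg _) hi
        linarith [abs_nonneg (a N ε)])
      (by linarith [Finset.sum_nonneg fun i (_ : i ∈ window N x ε) => abs_nonneg (ω N i)])
    have h4 : |d N ε n| ≤ (|1 / (2 * (N : ℝ) * ε)| * (window N x ε).card * B + B) *
        Real.exp (-K * (n : ℝ) ^ 2 / 3) := by
      refine (abs_sub _ _).trans ?_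
      linarith
    calc _ ≤ (|1 / (2 * (N : ℝ) * ε)| * (window N x ε).card * B + B) *
        Real.exp (-K * (n : ℝ) ^ 2 / 3) * Real.exp (K * (n : ℝ) ^ 2 / 3) := by gcongr
      _ = _ := by
        rw [mul_assoc, ← Real.exp_add]
        ring_nf
        simp
  have hBdd (N : ℕ) (ε : ℝ) :
      BddAbove (Set.range fun n : ℤ => |d N ε n| * Real.exp (K * (n : ℝ) ^ 2 / 3)) := by
    obtain ⟨B, hB⟩ := hbdd N ε
    exact ⟨B, by rintro _ ⟨n, rfl⟩; exact hB n⟩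
  set C : ℕ → ℝ → ℝ := fun N ε => ⨆ n : ℤ, |d N ε n| * Real.exp (K * (n : ℝ) ^ 2 / 3) with hCdef
  have hdC (N : ℕ) (ε : ℝ) (n : ℤ) : |d N ε n| ≤ C N ε * Real.exp (-K * (n : ℝ) ^ 2 / 3) := by
    have h1 : |d N ε n| * Real.exp (K * (n : ℝ) ^ 2 / 3) ≤ C N ε := le_ciSup (hBdd N ε) n
    calc |d N ε n| = |d N ε n| * Real.exp (K * (n : ℝ) ^ 2 / 3) *
          Real.exp (-K * (n : ℝ) ^ 2 / 3) := by
          rw [mul_assoc, ← Real.exp_add]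
          ring_nf
          simp
      _ ≤ _ := by gcongr
  have hC : Tendsto (fun p : ℝ × ℕ => C p.2 p.1) iterFilter (𝓝 0) := by
    rw [Metric.tendsto_nhds]
    intro δ hδ
    obtain ⟨B, hB0, hB⟩ := muK_le hK (|w| + 1)
    -- Outside a finite set of `n` the decay bound suffices; inside, pointwise convergence does.
    have htail : ∀ᶠ n : ℤ in cofinite, Real.exp (-(K / 12) * (n : ℝ) ^ 2) < δ / (6 * B) := by
      have := (summable_gauss (show 0 < K / 12 by positivity) 0).tendsto_cofinite_zero
      simp only [pow_zero, one_mul] at this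
      exact this.eventually_lt_const (by positivity)
    have hfin : ∀ᶠ p : ℝ × ℕ in iterFilter,
        ∀ n ∈ {n : ℤ | ¬ Real.exp (-(K / 12) * (n : ℝ) ^ 2) < δ / (6 * B)},
          |d p.2 p.1 n| * Real.exp (K * (n : ℝ) ^ 2 / 3) < δ / 2 := by
      refine (eventually_all_finite (eventually_cofinite.1 htail)).2 fun n _ => ?_
      have := (hpt n).abs.mul_const (Real.exp (K * (n : ℝ) ^ 2 / 3))
      rw [abs_zero, zero_mul] at this
      exact this.eventually_lt_const (by positivity)
    have hcc' : ∀ᶠ p : ℝ × ℕ in iterFilter,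
        |1 / (2 * (p.2 : ℝ) * p.1)| * ((window p.2 x p.1).card : ℝ) < 2 := by
      have := hcc.abs
      simp only [abs_mul, Nat.abs_cast, abs_one] at this
      exact this.eventually_lt_const (by norm_num)
    filter_upwards [hfin, hcc', hclose 1 one_pos, Metric.tendsto_nhds.1 hA 1 one_pos]
      with p h1 h2 h3 h4
    have hCnn : 0 ≤ C p.2 p.1 := Real.iSup_nonneg fun n => by positivity
    rw [Real.dist_eq, sub_zero, abs_of_nonneg hCnn]
    refine lt_of_le_of_lt (ciSup_le fun n => ?_) (half_lt_self hδ)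
    by_cases hn : Real.exp (-(K / 12) * (n : ℝ) ^ 2) < δ / (6 * B)
    · obtain ⟨h5, h6⟩ := winAvg_muInf_le (x := x) (N := p.2) (ε := p.1) (om := ω p.2)
        (l := lam p.2) (v := a p.2 p.1) (n := n) hK (fun v y hv => hB v y hv n)
        (fun i hi => by
          have := abs_sub_abs_le_abs_sub (ω p.2 i) w
          linarith [h3 i hi])
        (by
          rw [Real.dist_eq] at h4
          have := abs_sub_abs_le_abs_sub (a p.2 p.1) w
          linarith)
      have h7 : |d p.2 p.1 n| ≤ δ / 2 * Real.exp (-K * (n : ℝ) ^ 2 / 3) := by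
        have h8 : B * Real.exp (-(K / 12) * (n : ℝ) ^ 2) ≤ δ / 6 := by
          rw [lt_div_iff₀ (by positivity)] at hn
          linarith
        calc |d p.2 p.1 n| ≤ 2 * (B * Real.exp (-(K / 12) * (n : ℝ) ^ 2) *
              Real.exp (-K * (n : ℝ) ^ 2 / 3)) + B * Real.exp (-(K / 12) * (n : ℝ) ^ 2) *
              Real.exp (-K * (n : ℝ) ^ 2 / 3) := by
              refine (abs_sub _ _).trans (add_le_add (h5.trans ?_) h6)
              gcongr
          _ = 3 * (B * Real.exp (-(K / 12) * (n : ℝ) ^ 2)) *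
              Real.exp (-K * (n : ℝ) ^ 2 / 3) := by ring
          _ ≤ 3 * (δ / 6) * Real.exp (-K * (n : ℝ) ^ 2 / 3) := by gcongr
          _ = _ := by ring
      calc _ ≤ δ / 2 * Real.exp (-K * (n : ℝ) ^ 2 / 3) * Real.exp (K * (n : ℝ) ^ 2 / 3) := by
            gcongr
        _ = δ / 2 := by
          rw [mul_assoc, ← Real.exp_add]
          ring_nf
          simp
    · exact (h1 n hn).le
  refine ⟨⟨C, dtendsto_iff.2 hC, fun N ε _ n => hdC N ε n⟩, fun f hf => dtendsto_iff.2 ?_⟩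
  have hlim := hC.mul_const (∑' n : ℤ, |f n| * Real.exp (-K * (n : ℝ) ^ 2 / 3))
  rw [zero_mul] at hlim
  refine squeeze_zero_norm (fun p => ?_) hlim
  have hdecay (v : ℝ) : ∃ B, ∀ y, ∀ n : ℤ, |muK K v y n| ≤ B * Real.exp (-K * (n : ℝ) ^ 2 / 3) := by
    obtain ⟨B, hB0, hB⟩ := muK_le hK |v|
    refine ⟨B, fun y n => ?_⟩
    rw [abs_of_nonneg (muK_nonneg hK _ _ _)]
    refine (hB v y le_rfl n).trans ?_
    gcongr
    refine mul_le_of_le_one_right hB0.le (Real.exp_le_one_iff.2 ?_)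
    nlinarith [mul_nonneg hK.le (sq_nonneg (n : ℝ))]
  have hs1 (v y : ℝ) : Summable fun n => f n * muK K v y n := by
    obtain ⟨B, hB⟩ := hdecay v
    exact summable_mul_of_decay hf (hB y)
  have hs2 : Summable fun n => f n * muInf K (a p.2 p.1) n := by
    obtain ⟨B, hB⟩ := hdecay (a p.2 p.1)
    refine summable_mul_of_decay hf (B := B) fun n => ?_
    have := intervalIntegral.norm_integral_le_of_norm_le_const (a := (0 : ℝ)) (b := 1)
      (f := fun y : ℝ => muK K (a p.2 p.1) y n)
      (C := B * Real.exp (-K * (n : ℝ) ^ 2 / 3)) fun y _ => hB y n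
    simpa [muInf] using this
  have hswap : winAvg p.2 x p.1 (fun i => ∑' n : ℤ, f n * muK K (ω p.2 i) (lam p.2 i) n) =
      ∑' n : ℤ, f n * winAvg p.2 x p.1 (fun i => muK K (ω p.2 i) (lam p.2 i) n) := by
    unfold winAvg
    rw [← Summable.tsum_finsetSum fun i _ => hs1 _ _, ← tsum_mul_left]
    refine tsum_congr fun n => ?_
    rw [← Finset.mul_sum]
    ring
  have hs3 : Summable fun n : ℤ =>
      f n * winAvg p.2 x p.1 (fun i => muK K (ω p.2 i) (lam p.2 i) n) := by
    unfold winAvg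
    refine ((summable_sum fun i (_ : i ∈ window p.2 x p.1) => hs1 (ω p.2 i) (lam p.2 i)).mul_left
      (1 / (2 * (p.2 : ℝ) * p.1))).congr fun n => ?_
    rw [← Finset.mul_sum]
    ring
  rw [hswap, ← hs3.tsum_sub hs2, ← tsum_mul_left]
  refine tsum_of_norm_bounded (hf.mul_left (C p.2 p.1)).hasSum fun n => ?_
  rw [← mul_sub, norm_mul, Real.norm_eq_abs, Real.norm_eq_abs]
  calc |f n| * |d p.2 p.1 n| ≤ |f n| * (C p.2 p.1 * Real.exp (-K * (n : ℝ) ^ 2 / 3)) := by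
        gcongr; exact hdC _ _ _
    _ = _ := by ring
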